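/- For every natural number n, the function ν_n satisfies ν_n''(z) − 2(z + 4z/(1+2z²))·ν_n'(z) + 2n·ν_n(z) = 0 for all z ∈ ℂ with 1 + 2z² ≠ 0. -/

import Mathlib

/-- Even coefficients c_{2k}(n) of the generalized power series. -/
noncomputable def ceven (n k : ℕ) : ℂ :=
  if k = 0 then 1
  else if k = 1 then -(n : ℂ)
  else (-1) ^ k * 2 ^ k * (n : ℂ) * ((n : ℂ) - ((2 * (k : ℂ) - 1) ^ 2 + 1)) *
    (∏ j ∈ Finset.Icc 1 (k - 2), ((n : ℂ) - 2 * (1 + (j : ℂ)))) /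
      (Nat.factorial (2 * k) : ℂ)

/-- Odd coefficients: `codd n k` is c_{2k-1}(n), for k ≥ 1. -/
noncomputable def codd (n k : ℕ) : ℂ :=
  if k ≤ 1 then 1
  else (-1) ^ (k + 1) * 2 ^ (k - 1) * ((n : ℂ) - ((2 * ((k : ℂ) - 1)) ^ 2 + 1)) *
    (∏ j ∈ Finset.Icc 1 (k - 2), ((n : ℂ) - (2 * (1 + (j : ℂ)) - 1))) /
      (Nat.factorial (2 * k - 1) : ℂ)

/-- μₙ(z) = Σ_{k≥0} c_{2k}(n)·z^{2k}. -/
noncomputable def muF (n : ℕ) (z : ℂ) : ℂ := ∑' k : ℕ, ceven n k * z ^ (2 * k)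

/-- νₙ(z) = Σ_{k≥1} c_{2k-1}(n)·z^{2k-1}. -/
noncomputable def nuF (n : ℕ) (z : ℂ) : ℂ := ∑' k : ℕ, codd n (k + 1) * z ^ (2 * k + 1)

/-- βₙ = μₙ + νₙ. -/
noncomputable def betaF (n : ℕ) (z : ℂ) : ℂ := muF n z + nuF n z


def EntS (a : ℕ → ℂ) : Prop := ∀ r : ℝ, 0 ≤ r → Summable fun k => ‖a k‖ * r ^ k

theorem EntS.add {a b : ℕ → ℂ} (ha : EntS a) (hb : EntS b) : EntS fun k => a k + b k := by
  intro r hr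
  refine Summable.of_nonneg_of_le (fun k => by positivity) (fun k => ?_) ((ha r hr).add (hb r hr))
  rw [← add_mul]
  gcongr
  exact norm_add_le _ _

theorem EntS.smul {a : ℕ → ℂ} (ha : EntS a) (c : ℂ) : EntS fun k => c * a k := by
  intro r hr
  refine ((ha r hr).mul_left ‖c‖).congr fun k => ?_
  rw [norm_mul]; ring

theorem EntS.nmul {a : ℕ → ℂ} (ha : EntS a) : EntS fun k => (k : ℂ) * a k := by
  intro r hr
  refine Summable.of_nonneg_of_le (fun k => by positivity) (fun k => ?_) (ha (2 * r) (by positivity))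
  rw [norm_mul, Complex.norm_natCast, mul_pow]
  have : (k : ℝ) ≤ 2 ^ k := by exact_mod_cast (Nat.lt_two_pow_self).le
  have h2 : 0 ≤ ‖a k‖ * r ^ k := by positivity
  nlinarith

theorem EntS.shift {a : ℕ → ℂ} (ha : EntS a) : EntS fun k => a (k + 1) := by
  intro r hr
  have h := (summable_nat_add_iff 1).2 (ha (r + 1) (by positivity))
  refine Summable.of_nonneg_of_le (fun k => by positivity) (fun k => ?_) h
  have : r ^ k ≤ (r + 1) ^ (k + 1) := by
    calc r ^ k ≤ (r + 1) ^ k := by gcongr; linarith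
      _ ≤ (r + 1) ^ (k + 1) := pow_le_pow_right₀ (by linarith) (by omega)
  gcongr

theorem EntS.unshift {a : ℕ → ℂ} (ha : EntS fun k => a (k + 1)) : EntS a := by
  intro r hr
  rw [← summable_nat_add_iff 1]
  refine ((ha r hr).mul_left r).congr fun k => ?_
  ring

theorem EntS.summable {a : ℕ → ℂ} (ha : EntS a) (z : ℂ) : Summable fun k => a k * z ^ k := by
  refine Summable.of_norm ((ha ‖z‖ (norm_nonneg _)).congr fun k => ?_)
  rw [norm_mul, norm_pow]

theorem EntS.der {a : ℕ → ℂ} (ha : EntS a) : EntS fun k => ((k : ℂ) + 1) * a (k + 1) := by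
  have := ha.nmul.shift
  simpa using this

noncomputable def psum (a : ℕ → ℂ) (z : ℂ) : ℂ := ∑' k : ℕ, a k * z ^ k

theorem EntS.hasDerivAt {a : ℕ → ℂ} (ha : EntS a) (z : ℂ) :
    HasDerivAt (psum a) (psum (fun k => ((k : ℂ) + 1) * a (k + 1)) z) z := by
  set R : ℝ := ‖z‖ + 1 with hR
  have hR1 : 1 ≤ R := by have := norm_nonneg z; linarith
  have hz : z ∈ Metric.ball (0 : ℂ) R := by simp [hR]
  have hb : ∀ (k : ℕ) (y : ℂ), y ∈ Metric.ball (0 : ℂ) R →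
      ‖a k * ((k : ℂ) * y ^ (k - 1))‖ ≤ ‖(k : ℂ) * a k‖ * R ^ k := by
    intro k y hy
    have hy' : ‖y‖ ≤ R := by simpa using (Metric.mem_ball.1 hy).le
    have : ‖y‖ ^ (k - 1) ≤ R ^ k :=
      (pow_le_pow_left₀ (norm_nonneg _) hy' _).trans (pow_le_pow_right₀ hR1 (by omega))
    calc ‖a k * ((k : ℂ) * y ^ (k - 1))‖ = ‖(k : ℂ) * a k‖ * ‖y‖ ^ (k - 1) := by
          simp only [norm_mul, norm_pow]; ring
      _ ≤ _ := by gcongr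
  have hu := ha.nmul R (by linarith)
  have h := hasDerivAt_tsum_of_isPreconnected (u := fun k : ℕ => ‖(k : ℂ) * a k‖ * R ^ k)
    (g := fun (k : ℕ) (y : ℂ) => a k * y ^ k) (g' := fun (k : ℕ) (y : ℂ) => a k * ((k : ℂ) * y ^ (k - 1)))
    hu Metric.isOpen_ball
    (convex_ball (0 : ℂ) R).isPreconnected
    (fun k y _ => (hasDerivAt_pow k y).const_mul (a k)) hb hz (ha.summable z) hz
  have hs : Summable fun k => a k * ((k : ℂ) * z ^ (k - 1)) :=
    Summable.of_norm_bounded hu (fun k => hb k z hz)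
  refine h.congr_deriv ?_
  rw [hs.tsum_eq_zero_add]
  simp only [psum, Nat.cast_zero, zero_mul, mul_zero, zero_add, Nat.add_sub_cancel]
  refine tsum_congr fun k => ?_
  push_cast
  ring

noncomputable def DD (n : ℕ) (k : ℕ) : ℂ :=
  (-1) ^ (k + 1) * 2 ^ (k + 1) *
    (∏ j ∈ Finset.Icc 1 k, ((n : ℂ) - (2 * (1 + (j : ℂ)) - 1))) / (Nat.factorial (2 * k + 3) : ℂ)

theorem DD_succ (n k : ℕ) : DD n (k + 1) * ((2 * k + 4) * (2 * k + 5)) =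
    -2 * ((n : ℂ) - (2 * k + 3)) * DD n k := by
  unfold DD
  rw [Finset.prod_Icc_succ_top (by omega)]
  have e : 2 * (k + 1) + 3 = (2 * k + 3) + 1 + 1 := by ring
  rw [e, Nat.factorial_succ, Nat.factorial_succ]
  have h0 : (Nat.factorial (2 * k + 3) : ℂ) ≠ 0 := by exact_mod_cast Nat.factorial_ne_zero _
  have h1 : (2 * (k : ℂ) + 4) ≠ 0 := by exact_mod_cast (by omega : 2 * k + 4 ≠ 0)
  have h2 : (2 * (k : ℂ) + 5) ≠ 0 := by exact_mod_cast (by omega : 2 * k + 5 ≠ 0)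
  push_cast
  rw [show (2 * (k : ℂ) + 4 + 1) = 2 * k + 5 by ring, show (2 * (k : ℂ) + 3 + 1) = 2 * k + 4 by ring]
  field_simp
  ring

theorem codd_DD (n k : ℕ) : codd n (k + 2) = ((n : ℂ) - (4 * (k + 1) ^ 2 + 1)) * DD n k := by
  unfold codd DD
  rw [if_neg (by omega)]
  have e : 2 * (k + 2) - 1 = 2 * k + 3 := by omega
  rw [e]
  simp only [Nat.add_sub_cancel, show k + 2 - 1 = k + 1 by omega]
  push_cast
  ring

theorem DD_ent (n : ℕ) : EntS (DD n) := by
  intro r hr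
  refine summable_of_ratio_norm_eventually_le (r := 1 / 2) (by norm_num) ?_
  obtain ⟨N, hN⟩ := exists_nat_gt ((n : ℝ) + 4 * r + 3)
  filter_upwards [Filter.eventually_ge_atTop N] with k hk
  have hk' : (n : ℝ) + 4 * r + 3 ≤ k := hN.le.trans (by exact_mod_cast hk)
  have h := congrArg norm (DD_succ n k)
  have e1 : ‖((2 * k + 4) * (2 * k + 5) : ℂ)‖ = (2 * k + 4) * (2 * k + 5) := by
    have : ((2 * k + 4) * (2 * k + 5) : ℂ) = (((2 * k + 4) * (2 * k + 5) : ℕ) : ℂ) := by push_cast; ring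
    rw [this, Complex.norm_natCast]; push_cast; ring
  have e2 : ‖(n : ℂ) - (2 * k + 3)‖ ≤ 2 * k + 4 + k := by
    have e3 : ‖(2 * k + 3 : ℂ)‖ = 2 * k + 3 := by
      have : (2 * k + 3 : ℂ) = ((2 * k + 3 : ℕ) : ℂ) := by push_cast; ring
      rw [this, Complex.norm_natCast]; push_cast; ring
    have := norm_sub_le (n : ℂ) (2 * k + 3)
    rw [e3, Complex.norm_natCast] at this
    linarith
  rw [norm_mul, e1, norm_mul, norm_mul] at h
  have e4 : ‖(-2 : ℂ)‖ = 2 := by simp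
  rw [e4] at h
  have hd := norm_nonneg (DD n k)
  have hk0 : (0 : ℝ) ≤ k := by positivity
  have hle : ‖DD n (k + 1)‖ * ((2 * k + 4) * (2 * k + 5)) ≤ (2 * (2 * k + 4 + k)) * ‖DD n k‖ := by
    rw [h]; gcongr
  have key : ‖DD n (k + 1)‖ * r ≤ 1 / 2 * ‖DD n k‖ := by
    have hp : (0 : ℝ) < (2 * k + 4) * (2 * k + 5) := by positivity
    refine le_of_mul_le_mul_right ?_ hp
    calc ‖DD n (k + 1)‖ * r * ((2 * k + 4) * (2 * k + 5))
        = (‖DD n (k + 1)‖ * ((2 * k + 4) * (2 * k + 5))) * r := by ring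
      _ ≤ (2 * (2 * k + 4 + k)) * ‖DD n k‖ * r := by gcongr
      _ = ((2 * (2 * k + 4 + k)) * r) * ‖DD n k‖ := by ring
      _ ≤ (1 / 2 * ((2 * k + 4) * (2 * k + 5))) * ‖DD n k‖ := by
          refine mul_le_mul_of_nonneg_right ?_ hd
          have hr4 : 4 * r ≤ k := by linarith [(Nat.cast_nonneg n : (0:ℝ) ≤ n)]
          nlinarith
      _ = _ := by ring
  have hrk : 0 ≤ r ^ k := by positivity
  rw [norm_mul, norm_mul, norm_norm, norm_norm, norm_pow, norm_pow, Real.norm_of_nonneg hr, pow_succ]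
  nlinarith

theorem A_ent (n : ℕ) : EntS fun k => codd n (k + 1) := by
  apply EntS.unshift
  have hD := DD_ent n
  have := ((hD.smul ((n : ℂ) - 5)).add (hD.nmul.smul (-8))).add (hD.nmul.nmul.smul (-4))
  convert this using 2 with k
  rw [codd_DD]; ring

theorem rec0 (n : ℕ) : 6 * codd n 2 + (2 * n - 10) * codd n 1 = 0 := by
  have := codd_DD n 0
  simp [DD, Nat.factorial] at this
  rw [this]
  simp [codd]
  ring

theorem recS (n k : ℕ) : (2 * (k : ℂ) + 5) * (2 * k + 4) * codd n (k + 3)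
    + (8 * k * (k + 1) - 8 * (k + 1) - 10 + 2 * n) * codd n (k + 2)
    + 4 * (n - 1 - 2 * k) * codd n (k + 1) = 0 := by
  have h1 := DD_succ n k
  rw [show k + 3 = (k + 1) + 2 by ring, codd_DD, codd_DD]
  rcases k with _ | k
  · have : DD n 0 = -1 / 3 := by simp [DD, Nat.factorial]; norm_num
    rw [this] at h1 ⊢
    simp [codd] at h1 ⊢
    linear_combination (n - 17 : ℂ) * h1
  · have h2 := DD_succ n k
    rw [show k + 1 + 1 = k + 2 by ring, codd_DD]
    push_cast at h1 h2 ⊢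
    linear_combination ((n : ℂ) - (4 * (k + 1 + 1 + 1) ^ 2 + 1)) * h1 + 2 * ((n : ℂ) - (4 * (k + 1) ^ 2 + 1)) * h2

theorem g_ode (n : ℕ) (w : ℂ) (A : ℕ → ℂ) (hA : A = fun k => codd n (k + 1))
    (g0 g1 g2 : ℂ) (h0 : g0 = psum A w) (h1 : g1 = psum (fun k => ((k : ℂ) + 1) * A (k + 1)) w)
    (h2 : g2 = psum (fun k => ((k : ℂ) + 1) * (((k + 1 : ℕ) : ℂ) + 1) * A (k + 1 + 1)) w) :
    (1 + 2 * w) * (6 * g1 + 4 * w * g2) - 2 * (5 + 2 * w) * (g0 + 2 * w * g1)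
      + 2 * n * (1 + 2 * w) * g0 = 0 := by
  have eA : EntS A := hA ▸ A_ent n
  have s0 : HasSum (fun k => A k * w ^ k) g0 := h0 ▸ (eA.summable w).hasSum
  have s1 : HasSum (fun k : ℕ => ((k : ℂ) + 1) * A (k + 1) * w ^ k) g1 :=
    h1 ▸ (eA.der.summable w).hasSum
  have s2 : HasSum (fun k : ℕ => ((k : ℂ) + 1) * (((k + 1 : ℕ) : ℂ) + 1) * A (k + 1 + 1) * w ^ k) g2 := by
    have := (eA.der.der.summable w)
    simp only [← mul_assoc] at this
    exact h2 ▸ this.hasSum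
  have t1 : HasSum (fun k : ℕ => (k : ℂ) * A k * w ^ k) (w * g1) := by
    rw [← hasSum_nat_add_iff' 1]
    simpa [pow_succ, mul_comm, mul_left_comm, mul_assoc] using s1.mul_left w
  have t2 : HasSum (fun k : ℕ => (k : ℂ) * (k + 1) * A (k + 1) * w ^ k) (w * g2) := by
    rw [← hasSum_nat_add_iff' 1]
    simpa [pow_succ, mul_comm, mul_left_comm, mul_assoc] using s2.mul_left w
  have t3 : HasSum (fun k : ℕ => (k : ℂ) * (k - 1) * A k * w ^ k) (w * (w * g2)) := by
    rw [← hasSum_nat_add_iff' 1]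
    simpa [pow_succ, mul_comm, mul_left_comm, mul_assoc] using t2.mul_left w
  have E := ((((s1.mul_left 6).add (t2.mul_left 4)).add (t1.mul_left (-8))).add
    (t3.mul_left 8)).add (s0.mul_left (2 * (n : ℂ) - 10))
  have F := (((s0.mul_left (4 * (n : ℂ) - 4)).add (t1.mul_left (-8)))).mul_left (-w)
  rw [← hasSum_nat_add_iff' 1] at E
  have r0 := rec0 n
  have e := E.unique ((congrArg (fun f => HasSum f _) (funext ?_)).mp F)
  · simp [hA] at e
    linear_combination e + r0
  · intro k
    have := recS n k
    simp only [hA]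
    push_cast
    linear_combination -w ^ (k + 1) * this

theorem stmt9 (n : ℕ) (z : ℂ) (hz : 1 + 2 * z ^ 2 ≠ 0) :
    deriv (deriv (nuF n)) z
      - 2 * (z + 4 * z / (1 + 2 * z ^ 2)) * deriv (nuF n) z
      + 2 * (n : ℂ) * nuF n z = 0 := by
  set A : ℕ → ℂ := fun k => codd n (k + 1) with hA
  have eA : EntS A := A_ent n
  set B : ℕ → ℂ := fun k => ((k : ℂ) + 1) * A (k + 1) with hB
  have eB : EntS B := eA.der
  set C : ℕ → ℂ := fun k => ((k : ℂ) + 1) * B (k + 1) with hC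
  have hnu : nuF n = fun z => z * psum A (z ^ 2) := by
    funext z
    simp only [nuF, psum]
    rw [← tsum_mul_left]
    refine tsum_congr fun k => ?_
    rw [pow_succ, pow_mul]; ring
  have hsq : ∀ z : ℂ, HasDerivAt (fun z : ℂ => z ^ 2) (2 * z) z := fun z => by
    simpa using hasDerivAt_pow 2 z
  have d0 : ∀ z : ℂ, HasDerivAt (fun z => psum A (z ^ 2)) (psum B (z ^ 2) * (2 * z)) z :=
    fun z => HasDerivAt.comp (h₂ := psum A) z (eA.hasDerivAt (z ^ 2)) (hsq z)
  have d1 : ∀ z : ℂ, HasDerivAt (fun z => psum B (z ^ 2)) (psum C (z ^ 2) * (2 * z)) z :=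
    fun z => HasDerivAt.comp (h₂ := psum B) z (eB.hasDerivAt (z ^ 2)) (hsq z)
  have D1 : deriv (nuF n) = fun z => psum A (z ^ 2) + 2 * (z ^ 2 * psum B (z ^ 2)) := by
    funext z
    rw [hnu]
    refine (((hasDerivAt_id' z).mul (d0 z)).congr_deriv ?_).deriv
    ring
  have D2 : deriv (deriv (nuF n)) z = 6 * z * psum B (z ^ 2) + 4 * z ^ 3 * psum C (z ^ 2) := by
    rw [D1]
    refine (((d0 z).add (((hsq z).mul (d1 z)).const_mul 2)).congr_deriv ?_).deriv
    ring
  have ode := g_ode n (z ^ 2) A hA _ (psum B (z ^ 2)) (psum C (z ^ 2)) rfl rfl (by simp only [hC, hB, mul_assoc])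
  rw [D2, D1, hnu]
  have hdiv : 4 * z / (1 + 2 * z ^ 2) * (1 + 2 * z ^ 2) = 4 * z := div_mul_cancel₀ _ hz
  refine mul_left_cancel₀ hz ?_
  linear_combination z * ode - 2 * (psum A (z ^ 2) + 2 * (z ^ 2 * psum B (z ^ 2))) * hdiv
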